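/- Random perturbations — almost sure convergence: In the same setting as the preceding random-perturbation theorem (leafless tree T with tight transition families q, q' having uniformly summable local entropies; random transitions p(y|x)(ω) = (1 − δ_{|x|}(ω))·q(y|x) + δ_{|x|}(ω)·q'(y|x) with measurable δ_n : Ω → [0,1]; length function ℓ with c₁ ≤ ℓ ≤ c₂; H_q(x)/ℓ(x) → h finite as |x| → ∞; D_{q',q}(x) < D < ∞ for all x), if δ_n → 0 almost surely as n → ∞, then almost surely H(P_n)/ℓ(P_n) → h as n → ∞; that is, for Pr-almost every ω, the entropy rate of the perturbed process equals h. -/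

import Mathlib

open scoped BigOperators
open Filter

noncomputable section

/-- The entropy function `φ(t) = t·log₂(1/t)` (which vanishes at `t = 0`). -/
def phi (t : ℝ) : ℝ := t * Real.logb 2 (1 / t)

/-- A rooted tree: a set of finite lists over ℕ containing the empty list (the root)
and closed under taking prefixes. -/
def IsTree (T : Set (List ℕ)) : Prop :=
  ([] : List ℕ) ∈ T ∧ ∀ x ∈ T, ∀ y : List ℕ, y <+: x → y ∈ T

/-- The successors of `x` in `T`: one-entry extensions of `x` lying in `T`. -/
def succs (T : Set (List ℕ)) (x : List ℕ) : Set (List ℕ) :=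
  {y | y ∈ T ∧ ∃ n : ℕ, y = x ++ [n]}

/-- `x` is a leaf of `T`. -/
def IsLeaf (T : Set (List ℕ)) (x : List ℕ) : Prop :=
  x ∈ T ∧ succs T x = ∅

/-- The boundary of `T`: its set of leaves. -/
def bdry (T : Set (List ℕ)) : Set (List ℕ) := {x | IsLeaf T x}

/-- The interior of `T`. -/
def intr (T : Set (List ℕ)) : Set (List ℕ) := T \ bdry T

/-- No vertex has exactly one successor. -/
def NoUnary (T : Set (List ℕ)) : Prop :=
  ∀ x ∈ T, ∀ y : List ℕ, succs T x ≠ {y}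

/-- `T` has no infinite geodesic. -/
def NoInfGeo (T : Set (List ℕ)) : Prop :=
  ¬ ∃ ξ : ℕ → ℕ, ∀ n : ℕ, (List.ofFn fun i : Fin n => ξ i) ∈ T

/-- `∂T_x`: the set of leaves having `x` as a prefix. -/
def cone (T : Set (List ℕ)) (x : List ℕ) : Set (List ℕ) :=
  {v | v ∈ bdry T ∧ x <+: v}

/-- `P(∂T_x)`. -/
def mass (T : Set (List ℕ)) (P : List ℕ → ℝ) (x : List ℕ) : ℝ :=
  ∑' v : cone T x, P v

/-- `|x|_ℓ`: the sum of `ℓ(y)` over the proper prefixes `y` of `x`. -/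
def lenWt (ℓ : List ℕ → ℝ) (x : List ℕ) : ℝ :=
  ∑ i ∈ Finset.range x.length, ℓ (x.take i)

/-- Expected length `ℓ(P)`. -/
def expLen (T : Set (List ℕ)) (ℓ P : List ℕ → ℝ) : ℝ :=
  ∑' v : bdry T, lenWt ℓ v * P v

/-- Forward transition probability `p(y|x) = P(∂T_y)/P(∂T_x)`. -/
def fwd (T : Set (List ℕ)) (P : List ℕ → ℝ) (x y : List ℕ) : ℝ :=
  mass T P y / mass T P x

/-- Node-average measure `μ_P(x) = ℓ(x)·P(∂T_x)/ℓ(P)`. -/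
def nodeAvg (T : Set (List ℕ)) (ℓ P : List ℕ → ℝ) (x : List ℕ) : ℝ :=
  ℓ x * mass T P x / expLen T ℓ P

/-- A (fully supported) probability measure on a set `S` of vertices. -/
def IsProbOn (S : Set (List ℕ)) (P : List ℕ → ℝ) : Prop :=
  (∀ v ∈ S, 0 < P v) ∧ HasSum (fun v : S => P v) 1

/-- A tight family of forward transition probabilities with uniformly summable entropies:
for every `ε > 0` there is `M` such that every `x ∈ T` admits `N_ε(x) ⊆ N(x)` with
`|N_ε(x)| ≤ M`, `∑_{y∈N(x)∖N_ε(x)} q(y|x) < ε` and `∑_{y∈N(x)∖N_ε(x)} φ(q(y|x)) < ε`. -/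
def TightFam (T : Set (List ℕ)) (q : List ℕ → List ℕ → ℝ) : Prop :=
  ∀ ε : ℝ, 0 < ε → ∃ M : ℕ, ∀ x ∈ T,
    ∃ F : Finset (List ℕ), ↑F ⊆ succs T x ∧ F.card ≤ M ∧
      (∑' y : {y : List ℕ // y ∈ succs T x ∧ y ∉ F}, q x y) < ε ∧
      (Summable fun y : {y : List ℕ // y ∈ succs T x ∧ y ∉ F} => phi (q x y)) ∧
      (∑' y : {y : List ℕ // y ∈ succs T x ∧ y ∉ F}, phi (q x y)) < ε

/-- The random perturbation `p(y|x)(ω) = (1 − δ_{|x|}(ω))·q(y|x) + δ_{|x|}(ω)·q'(y|x)`. -/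
def perturb {Ω : Type*} (q q' : List ℕ → List ℕ → ℝ) (δn : ℕ → Ω → ℝ)
    (x y : List ℕ) (ω : Ω) : ℝ :=
  (1 - δn x.length ω) * q x y + δn x.length ω * q' x y

/-- The (random) flow obtained by multiplying the transition probabilities `p` along the
prefix chain from the root to `x`. -/
def flowOf {Ω : Type*} (p : List ℕ → List ℕ → Ω → ℝ) (x : List ℕ) (ω : Ω) : ℝ :=
  ∏ i ∈ Finset.range x.length, p (x.take i) (x.take (i + 1)) ω

/-- The `n`-th level `S(n) = {x ∈ T : |x| = n}` of a leafless tree. -/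
def levn (T : Set (List ℕ)) (n : ℕ) : Set (List ℕ) :=
  {x | x ∈ T ∧ x.length = n}

lemma my_hasSum_congr {ι : Type*} {f g : ι → ℝ} {a : ℝ} (h : ∀ i, f i = g i) :
    HasSum f a ↔ HasSum g a := by rw [funext h]

lemma phi_eq (t : ℝ) : phi t = Real.negMulLog t / Real.log 2 := by
  unfold phi Real.negMulLog Real.logb
  rw [one_div, Real.log_inv]; ring

lemma log2pos : 0 < Real.log 2 := Real.log_pos (by norm_num)

lemma phi_nonneg {t : ℝ} (h0 : 0 ≤ t) (h1 : t ≤ 1) : 0 ≤ phi t := by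
  rw [phi_eq]
  exact div_nonneg (Real.negMulLog_nonneg h0 h1) log2pos.le

lemma phi_mul (a b : ℝ) : phi (a * b) = b * phi a + a * phi b := by
  simp only [phi_eq, Real.negMulLog_mul]; ring

lemma phi_le_two {t : ℝ} (h0 : 0 ≤ t) : phi t ≤ 2 := by
  rw [phi_eq, div_le_iff₀ log2pos]
  have h2 : (0.5 : ℝ) < Real.log 2 := by linarith [Real.log_two_gt_d9]
  rcases h0.eq_or_lt with rfl | h0
  · simp [Real.negMulLog]; linarith
  have := Real.one_sub_inv_le_log_of_pos h0
  have h3 : t * (1 - t⁻¹) ≤ t * Real.log t := mul_le_mul_of_nonneg_left this h0.le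
  rw [mul_sub, mul_inv_cancel₀ h0.ne'] at h3
  simp only [Real.negMulLog]
  linarith

lemma phi_add_le {a b : ℝ} (ha : 0 ≤ a) (hb : 0 ≤ b) : phi (a + b) ≤ phi a + phi b := by
  simp only [phi_eq, ← add_div]
  refine div_le_div_of_nonneg_right ?_ log2pos.le
  rcases ha.eq_or_lt with rfl | ha
  · simp [Real.negMulLog]
  rcases hb.eq_or_lt with rfl | hb
  · simp [Real.negMulLog]
  have h1 : Real.log a ≤ Real.log (a + b) := Real.log_le_log ha (by linarith)
  have h2 : Real.log b ≤ Real.log (a + b) := Real.log_le_log hb (by linarith)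
  simp only [Real.negMulLog]
  nlinarith

lemma phi_concave {a b d : ℝ} (ha : 0 ≤ a) (hb : 0 ≤ b) (h0 : 0 ≤ d) (h1 : d ≤ 1) :
    (1 - d) * phi a + d * phi b ≤ phi ((1 - d) * a + d * b) := by
  have := Real.concaveOn_negMulLog.2 (Set.mem_Ici.2 ha) (Set.mem_Ici.2 hb)
    (sub_nonneg.2 h1) h0 (by ring)
  simp only [smul_eq_mul] at this
  simp only [phi_eq]
  have h3 := div_le_div_of_nonneg_right this log2pos.le
  calc _ = _ := by ring
    _ ≤ _ := h3

lemma phi_tendsto {u : ℕ → ℝ} (hu : Tendsto u atTop (nhds 0)) :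
    Tendsto (fun n => phi (u n) + phi (1 - u n)) atTop (nhds 0) := by
  have h1 : Tendsto (fun n => Real.negMulLog (u n)) atTop (nhds (Real.negMulLog 0)) :=
    (Real.continuous_negMulLog.tendsto 0).comp hu
  have h2 : Tendsto (fun n => Real.negMulLog (1 - u n)) atTop (nhds (Real.negMulLog (1 - 0))) :=
    (Real.continuous_negMulLog.tendsto (1 - 0)).comp (hu.const_sub 1)
  have := (h1.div_const (Real.log 2)).add (h2.div_const (Real.log 2))
  simp only [phi_eq]
  simpa [Real.negMulLog] using this

lemma le_one_of_hasSum {ι : Type*} {f : ι → ℝ} (h0 : ∀ i, 0 ≤ f i) (h : HasSum f 1) (i : ι) :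
    f i ≤ 1 := le_hasSum h i (fun j _ => h0 j)

lemma tight_bound (T : Set (List ℕ)) (q : List ℕ → List ℕ → ℝ)
    (hq0 : ∀ x ∈ T, ∀ y ∈ succs T x, 0 ≤ q x y)
    (hq1 : ∀ x ∈ T, HasSum (fun y : succs T x => q x y) 1) (ht : TightFam T q) :
    ∃ C : ℝ, ∀ x ∈ T, (Summable fun y : succs T x => phi (q x y)) ∧
      0 ≤ (∑' y : succs T x, phi (q x y)) ∧ (∑' y : succs T x, phi (q x y)) ≤ C := by
  obtain ⟨M, hM⟩ := ht 1 one_pos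
  refine ⟨2 * M + 1, fun x hx => ?_⟩
  obtain ⟨F, hF, hc, -, hs, hlt⟩ := hM x hx
  have hle : ∀ y : succs T x, q x y ≤ 1 :=
    le_one_of_hasSum (f := fun y : succs T x => q x y) (fun y => hq0 x hx y y.2) (hq1 x hx)
  have hphi : ∀ y : succs T x, 0 ≤ phi (q x y) := fun y => phi_nonneg (hq0 x hx y y.2) (hle y)
  classical
  -- work with indicators on lists
  set g : List ℕ → ℝ := fun y => phi (q x y) with hg
  have e1 : HasSum (Set.indicator {y | y ∈ succs T x ∧ y ∉ F} g)
      (∑' y : {y : List ℕ // y ∈ succs T x ∧ y ∉ F}, phi (q x y)) :=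
    (hasSum_subtype_iff_indicator (f := g) (s := {y | y ∈ succs T x ∧ y ∉ F})).1 hs.hasSum
  have e2 : HasSum (Set.indicator (↑F : Set (List ℕ)) g) (∑ y ∈ F, g y) := by
    exact (hasSum_subtype_iff_indicator).1 (F.hasSum g)
  have e3 : HasSum (Set.indicator (succs T x) g)
      ((∑' y : {y : List ℕ // y ∈ succs T x ∧ y ∉ F}, phi (q x y)) + ∑ y ∈ F, g y) := by
    convert e1.add e2 using 1
    ext y
    by_cases h1 : y ∈ F
    · have h2 := hF h1
      simp [Set.indicator, h1, h2]
    · simp [Set.indicator, h1]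
  have e4 : HasSum (fun y : succs T x => phi (q x y)) _ :=
    (hasSum_subtype_iff_indicator (f := g)).2 e3
  refine ⟨e4.summable, tsum_nonneg hphi, ?_⟩
  rw [e4.tsum_eq]
  have : ∑ y ∈ F, g y ≤ ∑ y ∈ F, (2 : ℝ) :=
    Finset.sum_le_sum fun y hy => phi_le_two (hq0 x hx y (hF hy))
  rw [Finset.sum_const, nsmul_eq_mul] at this
  have hc' : (F.card : ℝ) ≤ M := by exact_mod_cast hc
  linarith

lemma mix_bound {ι : Type*} (a b : ι → ℝ) (d : ℝ) (h0 : 0 ≤ d) (h1 : d ≤ 1)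
    (ha : ∀ i, 0 ≤ a i) (hb : ∀ i, 0 ≤ b i) (ha1 : HasSum a 1) (hb1 : HasSum b 1)
    (sa : Summable fun i => phi (a i)) (sb : Summable fun i => phi (b i))
    (C : ℝ) (hA : ∑' i, phi (a i) ≤ C) (hB0 : 0 ≤ ∑' i, phi (b i)) (hB : ∑' i, phi (b i) ≤ C)
    (hA0 : 0 ≤ ∑' i, phi (a i)) :
    (∀ i, 0 ≤ (1 - d) * a i + d * b i) ∧ HasSum (fun i => (1 - d) * a i + d * b i) 1 ∧
    (Summable fun i => phi ((1 - d) * a i + d * b i)) ∧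
    |∑' i, phi ((1 - d) * a i + d * b i) - ∑' i, phi (a i)| ≤ d * C + (phi d + phi (1 - d)) := by
  have hd : 0 ≤ 1 - d := sub_nonneg.2 h1
  have n : ∀ i, 0 ≤ (1 - d) * a i + d * b i := fun i =>
    add_nonneg (mul_nonneg hd (ha i)) (mul_nonneg h0 (hb i))
  have s : HasSum (fun i => (1 - d) * a i + d * b i) 1 := by
    have := (ha1.mul_left (1 - d)).add (hb1.mul_left d)
    rwa [mul_one, mul_one, sub_add_cancel] at this
  have up : ∀ i, phi ((1 - d) * a i + d * b i) ≤
      (a i * phi (1 - d) + (1 - d) * phi (a i)) + (b i * phi d + d * phi (b i)) := fun i => by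
    rw [← phi_mul, ← phi_mul]
    exact phi_add_le (mul_nonneg hd (ha i)) (mul_nonneg h0 (hb i))
  have hup : HasSum (fun i => (a i * phi (1 - d) + (1 - d) * phi (a i))
      + (b i * phi d + d * phi (b i))) ((1 * phi (1 - d) + (1 - d) * ∑' i, phi (a i))
      + (1 * phi d + d * ∑' i, phi (b i))) :=
    ((ha1.mul_right _).add (sa.hasSum.mul_left _)).add
      ((hb1.mul_right _).add (sb.hasSum.mul_left _))
  have hlo : HasSum (fun i => (1 - d) * phi (a i) + d * phi (b i))
      ((1 - d) * ∑' i, phi (a i) + d * ∑' i, phi (b i)) :=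
    (sa.hasSum.mul_left _).add (sb.hasSum.mul_left _)
  have sp : Summable fun i => phi ((1 - d) * a i + d * b i) :=
    Summable.of_nonneg_of_le (fun i => phi_nonneg (n i) (le_one_of_hasSum n s i)) up hup.summable
  refine ⟨n, s, sp, ?_⟩
  have u := hasSum_le up sp.hasSum hup
  have l := hasSum_le (fun i => phi_concave (ha i) (hb i) h0 h1) hlo sp.hasSum
  have p0 := phi_nonneg h0 h1
  have p1 := phi_nonneg hd (by linarith)
  have m1 := mul_le_mul_of_nonneg_left hA h0
  have m2 := mul_le_mul_of_nonneg_left hB h0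
  have m3 := mul_nonneg h0 hB0
  have m4 := mul_nonneg h0 hA0
  rw [abs_le]
  constructor <;> linarith

/-- Vertices of level `n + 1` are pairs of a vertex of level `n` and a successor. -/
def levEquiv (T : Set (List ℕ)) (hT : IsTree T) (n : ℕ) :
    (Σ x : levn T n, succs T (x : List ℕ)) ≃ levn T (n + 1) where
  toFun z := ⟨z.2.1, z.2.2.1, by
    obtain ⟨⟨x, hx, hl⟩, ⟨y, hy, m, rfl⟩⟩ := z
    simp [hl]⟩
  invFun y := ⟨⟨y.1.dropLast, hT.2 _ y.2.1 _ (List.dropLast_prefix _), by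
    have := y.2.2
    simp [this]⟩, ⟨y.1, y.2.1, y.1.getLast (by
      have := y.2.2
      intro h
      simp [h] at this), (List.dropLast_append_getLast _).symm⟩⟩
  left_inv z := by
    have key : ∀ (a b : levn T n) (u : succs T (a : List ℕ)) (v : succs T (b : List ℕ)),
        a = b → u.1 = v.1 → (⟨a, u⟩ : Σ x : levn T n, succs T (x : List ℕ)) = ⟨b, v⟩ := by
      rintro a _ u v rfl h
      rw [Subtype.ext h]
    obtain ⟨⟨x, hx, hl⟩, ⟨y, hy, m, rfl⟩⟩ := z
    exact key _ _ _ _ (Subtype.ext (by simp)) rfl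
  right_inv y := by simp

lemma lev_step (T : Set (List ℕ)) (hT : IsTree T) (n : ℕ) (f g : List ℕ → ℝ) (a : ℝ)
    (hf : ∀ y ∈ levn T (n + 1), 0 ≤ f y)
    (hs : ∀ x ∈ levn T n, HasSum (fun y : succs T x => f y) (g x))
    (hg : HasSum (fun x : levn T n => g x) a) :
    HasSum (fun y : levn T (n + 1) => f y) a := by
  rw [← (levEquiv T hT n).hasSum_iff]
  have hsum : Summable ((fun y : levn T (n + 1) => f y) ∘ levEquiv T hT n) := by
    refine (summable_sigma_of_nonneg (fun z => hf _ (levEquiv T hT n z).2)).2 ?_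
    refine ⟨fun x => (hs x x.2).summable, ?_⟩
    convert hg.summable using 2 with x
    exact (hs x x.2).tsum_eq
  exact HasSum.sigma_of_hasSum hg (fun x => hs x x.2) hsum

lemma det_main (T : Set (List ℕ)) (hT : IsTree T) (p : List ℕ → List ℕ → ℝ) (B : List ℕ → ℝ)
    (hB0 : B [] = 1) (hBs : ∀ x m, B (x ++ [m]) = B x * p x (x ++ [m]))
    (hp0 : ∀ x ∈ T, ∀ y ∈ succs T x, 0 ≤ p x y)
    (hp1 : ∀ x ∈ T, HasSum (fun y : succs T x => p x y) 1)
    (hps : ∀ x ∈ T, Summable (fun y : succs T x => phi (p x y)))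
    (ℓ : List ℕ → ℝ) (c₁ c₂ : ℝ) (hc₁ : 0 < c₁)
    (hℓ : ∀ x ∈ T, c₁ ≤ ℓ x ∧ ℓ x ≤ c₂) (h : ℝ)
    (e : ℕ → ℝ) (he : Tendsto e atTop (nhds 0))
    (hpe : ∀ x ∈ T, |∑' y : succs T x, phi (p x y) - h * ℓ x| ≤ e x.length) :
    Tendsto (fun n : ℕ => (∑' x : levn T n, phi (B x)) / (∑' x : levn T n, lenWt ℓ x * B x))
      atTop (nhds h) := by
  have zero : ∀ f : List ℕ → ℝ, HasSum (fun x : levn T 0 => f x) (f []) := fun f => by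
    let r : levn T 0 := ⟨[], hT.1, rfl⟩
    exact hasSum_single r (fun y hy => absurd (Subtype.ext (List.length_eq_zero_iff.1 y.2.2)) hy)
  have nxt : ∀ n, ∀ x ∈ levn T n, ∀ y ∈ succs T x, y ∈ levn T (n + 1) := by
    rintro n x ⟨hx, hl⟩ y ⟨hy, m, rfl⟩
    exact ⟨hy, by simp [hl]⟩
  have prv : ∀ n, ∀ y ∈ levn T (n + 1), ∃ x ∈ levn T n, y ∈ succs T x := fun n y hy =>
    ⟨_, ((levEquiv T hT n).symm ⟨y, hy⟩).1.2, ((levEquiv T hT n).symm ⟨y, hy⟩).2.2⟩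
  have Bs : ∀ x, ∀ y ∈ succs T x, B y = B x * p x y := by
    rintro x y ⟨hy, m, rfl⟩; exact hBs x m
  have Ls : ∀ x, ∀ y ∈ succs T x, lenWt ℓ y = lenWt ℓ x + ℓ x := by
    rintro x y ⟨hy, m, rfl⟩
    simp only [lenWt, List.length_append, List.length_singleton, Finset.sum_range_succ]
    congr 1
    · refine Finset.sum_congr rfl fun i hi => ?_
      rw [List.take_append_of_le_length (Finset.mem_range.1 hi).le]
    · simp
  have Bn : ∀ n, ∀ x ∈ levn T n, 0 ≤ B x := by
    intro n
    induction n with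
    | zero =>
      rintro x ⟨-, hl⟩
      rw [List.length_eq_zero_iff.1 hl, hB0]; exact zero_le_one
    | succ n ih =>
      intro y hy
      obtain ⟨x, hx, hxy⟩ := prv n y hy
      rw [Bs x y hxy]
      exact mul_nonneg (ih x hx) (hp0 x hx.1 y hxy)
  have B1 : ∀ n, HasSum (fun x : levn T n => B x) 1 := by
    intro n
    induction n with
    | zero => have := zero B; rwa [hB0] at this
    | succ n ih =>
      refine lev_step T hT n B B 1 (Bn _) (fun x hx => ?_) ih
      have := (hp1 x hx.1).mul_left (B x)
      rw [mul_one] at this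
      exact (my_hasSum_congr fun y : succs T x => Bs x y y.2).2 this
  have Ble : ∀ n, ∀ x ∈ levn T n, B x ≤ 1 := fun n x hx =>
    le_one_of_hasSum (f := fun x : levn T n => B x) (fun y => Bn n y y.2) (B1 n) ⟨x, hx⟩
  have Ln : ∀ x ∈ T, 0 ≤ lenWt ℓ x := fun x hx =>
    Finset.sum_nonneg fun i _ => hc₁.le.trans (hℓ _ (hT.2 x hx _ (List.take_prefix _ _))).1
  have sℓ : ∀ n, Summable (fun x : levn T n => B x * ℓ x) := fun n =>
    Summable.of_nonneg_of_le
      (fun x => mul_nonneg (Bn n x x.2) (hc₁.le.trans (hℓ x x.2.1).1))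
      (fun x => mul_le_mul_of_nonneg_left (hℓ x x.2.1).2 (Bn n x x.2))
      ((B1 n).summable.mul_right c₂)
  set Hp : List ℕ → ℝ := fun x => ∑' y : succs T x, phi (p x y) with hHp
  -- difference terms
  have ae : ∀ n, ∀ x : levn T n, |B x * (Hp x - h * ℓ x)| ≤ B x * e n := fun n x => by
    rw [abs_mul, abs_of_nonneg (Bn n x x.2)]
    have := hpe x x.2.1
    rw [x.2.2] at this
    exact mul_le_mul_of_nonneg_left this (Bn n x x.2)
  have sd : ∀ n, Summable (fun x : levn T n => B x * (Hp x - h * ℓ x)) := fun n =>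
    Summable.of_norm_bounded ((B1 n).summable.mul_right (e n)) (ae n)
  have sH : ∀ n, Summable (fun x : levn T n => B x * Hp x) := fun n => by
    convert (sd n).add ((sℓ n).mul_left h) using 2 with x
    ring
  have stepW : ∀ n w, HasSum (fun x : levn T n => phi (B x)) w →
      HasSum (fun x : levn T (n + 1) => phi (B x)) (w + ∑' x : levn T n, B x * Hp x) := by
    intro n w hw
    refine lev_step T hT n (fun x => phi (B x)) (fun x => phi (B x) + B x * Hp x) _
      (fun y hy => phi_nonneg (Bn _ y hy) (Ble _ y hy)) (fun x hx => ?_) (hw.add (sH n).hasSum)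
    have := ((hp1 x hx.1).mul_right (phi (B x))).add ((hps x hx.1).hasSum.mul_left (B x))
    rw [one_mul] at this
    refine (my_hasSum_congr fun y => ?_).2 this
    rw [Bs x y y.2, phi_mul]
  have stepV : ∀ n v, HasSum (fun x : levn T n => lenWt ℓ x * B x) v →
      HasSum (fun x : levn T (n + 1) => lenWt ℓ x * B x) (v + ∑' x : levn T n, B x * ℓ x) := by
    intro n v hv
    refine lev_step T hT n (fun x => lenWt ℓ x * B x) (fun x => lenWt ℓ x * B x + B x * ℓ x) _
      (fun y hy => mul_nonneg (Ln y hy.1) (Bn _ y hy)) (fun x hx => ?_) (hv.add (sℓ n).hasSum)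
    have := (hp1 x hx.1).mul_left (lenWt ℓ x * B x + B x * ℓ x)
    rw [mul_one] at this
    refine (my_hasSum_congr fun y => ?_).2 this
    rw [Bs x y y.2, Ls x y y.2]; ring
  have sW : ∀ n, Summable (fun x : levn T n => phi (B x)) := by
    intro n
    induction n with
    | zero => exact (zero (fun x => phi (B x))).summable
    | succ n ih => exact (stepW n _ ih.hasSum).summable
  have sV : ∀ n, Summable (fun x : levn T n => lenWt ℓ x * B x) := by
    intro n
    induction n with
    | zero => exact (zero (fun x => lenWt ℓ x * B x)).summable
    | succ n ih => exact (stepV n _ ih.hasSum).summable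
  set W : ℕ → ℝ := fun n => ∑' x : levn T n, phi (B x) with hW
  set V : ℕ → ℝ := fun n => ∑' x : levn T n, lenWt ℓ x * B x with hV
  have W0 : W 0 = 0 := by
    have := (zero (fun x => phi (B x))).tsum_eq
    simp only [hB0] at this
    simp only [hW]; rw [this]; simp [phi]
  have V0 : V 0 = 0 := by
    have := (zero (fun x => lenWt ℓ x * B x)).tsum_eq
    simp only [hV]; rw [this]; simp [lenWt]
  have W1 : ∀ n, W (n + 1) = W n + ∑' x : levn T n, B x * Hp x := fun n =>
    (stepW n _ (sW n).hasSum).tsum_eq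
  have V1 : ∀ n, V (n + 1) = V n + ∑' x : levn T n, B x * ℓ x := fun n =>
    (stepV n _ (sV n).hasSum).tsum_eq
  have Vge : ∀ n : ℕ, c₁ * n ≤ V n := by
    intro n
    induction n with
    | zero => simp [V0]
    | succ n ih =>
      rw [V1]
      have h3 := hasSum_le (fun x : levn T n =>
        mul_le_mul_of_nonneg_left (hℓ x x.2.1).1 (Bn n x x.2))
        ((B1 n).mul_right c₁) (sℓ n).hasSum
      push_cast
      linarith
  set t : ℕ → ℝ := fun n => ∑' x : levn T n, B x * (Hp x - h * ℓ x) with ht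
  have tt : Tendsto t atTop (nhds 0) := by
    refine squeeze_zero_norm (fun n => ?_) he
    have h3 := tsum_of_norm_bounded (f := fun x : levn T n => B x * (Hp x - h * ℓ x)) ((B1 n).mul_right (e n)) (ae n)
    rwa [one_mul] at h3
  have dsum : ∀ n, W n - h * V n = ∑ i ∈ Finset.range n, t i := by
    intro n
    induction n with
    | zero => simp [W0, V0]
    | succ n ih =>
      rw [Finset.sum_range_succ, ← ih, W1, V1]
      have : t n = (∑' x : levn T n, B x * Hp x) - h * ∑' x : levn T n, B x * ℓ x := by
        rw [← tsum_mul_left, ← (sH n).tsum_sub ((sℓ n).mul_left h)]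
        refine tsum_congr fun x => ?_
        ring
      rw [this]; ring
  have ces := tt.cesaro
  have key : Tendsto (fun n => W n / V n - h) atTop (nhds 0) := by
    refine squeeze_zero_norm' (a := fun n : ℕ => c₁⁻¹ * ‖(n⁻¹ : ℝ) * ∑ i ∈ Finset.range n, t i‖)
      ?_ ?_
    · filter_upwards [eventually_gt_atTop 0] with n hn
      have hn' : (0 : ℝ) < n := by exact_mod_cast hn
      have hcn : 0 < c₁ * n := mul_pos hc₁ hn'
      have hVp : 0 < V n := hcn.trans_le (Vge n)
      have : W n / V n - h = (∑ i ∈ Finset.range n, t i) / V n := by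
        rw [← dsum]; field_simp
      rw [this, norm_div, norm_mul, Real.norm_of_nonneg hVp.le,
        Real.norm_of_nonneg (inv_nonneg.2 hn'.le), ← mul_assoc, ← mul_inv, div_eq_inv_mul]
      exact mul_le_mul_of_nonneg_right (inv_anti₀ hcn (Vge n)) (norm_nonneg _)
    · have := (ces.norm).const_mul c₁⁻¹
      simpa using this
  have := key.add_const h
  simpa using this


open MeasureTheory in
/-- Random perturbations, almost sure convergence: if `δ_n → 0` almost surely, then
almost surely `H(P_n)/ℓ(P_n) → h`. -/
theorem random_perturbation_almost_surely
    {Ω : Type*} [MeasurableSpace Ω] (Pr : Measure Ω) [IsProbabilityMeasure Pr]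
    (T : Set (List ℕ)) (hT : IsTree T)
    (hbranch : ∀ x ∈ T, ∃ y ∈ succs T x, ∃ z ∈ succs T x, y ≠ z)
    (q q' : List ℕ → List ℕ → ℝ)
    (hq0 : ∀ x ∈ T, ∀ y ∈ succs T x, 0 ≤ q x y)
    (hq1 : ∀ x ∈ T, HasSum (fun y : succs T x => q x y) 1)
    (hq'0 : ∀ x ∈ T, ∀ y ∈ succs T x, 0 ≤ q' x y)
    (hq'1 : ∀ x ∈ T, HasSum (fun y : succs T x => q' x y) 1)
    (htq : TightFam T q) (htq' : TightFam T q')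
    (δn : ℕ → Ω → ℝ) (hmeas : ∀ n : ℕ, Measurable (δn n))
    (hδ01 : ∀ n ω, δn n ω ∈ Set.Icc (0:ℝ) 1)
    (ℓ : List ℕ → ℝ) (c₁ c₂ : ℝ) (hc₁ : 0 < c₁) (hc₁₂ : c₁ ≤ c₂)
    (hℓ : ∀ x ∈ T, c₁ ≤ ℓ x ∧ ℓ x ≤ c₂)
    (h : ℝ)
    (hh : ∀ ε : ℝ, 0 < ε → ∃ k : ℕ, ∀ x ∈ T, k ≤ x.length →
      |(∑' y : succs T x, phi (q x y)) / ℓ x - h| < ε)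
    (D : ℝ)
    (hD : ∀ x ∈ T,
      (Summable fun y : succs T x => |q' x y * Real.logb 2 (q' x y / q x y)|) ∧
      (∑' y : succs T x, q' x y * Real.logb 2 (q' x y / q x y)) < D)
    (has : ∀ᵐ ω ∂Pr, Tendsto (fun n : ℕ => δn n ω) atTop (nhds 0)) :
    ∀ᵐ ω ∂Pr, Tendsto (fun n : ℕ =>
        (∑' x : levn T n, phi (flowOf (perturb q q' δn) x ω))
          / (∑' x : levn T n, lenWt ℓ x * flowOf (perturb q q' δn) x ω))
      atTop (nhds h) := by
  obtain ⟨C, hC⟩ := tight_bound T q hq0 hq1 htq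
  obtain ⟨C', hC'⟩ := tight_bound T q' hq'0 hq'1 htq'
  filter_upwards [has] with ω hω
  have mix := fun x (hx : x ∈ T) => mix_bound (fun y : succs T x => q x y)
    (fun y : succs T x => q' x y) (δn x.length ω) (hδ01 _ ω).1 (hδ01 _ ω).2
    (fun y => hq0 x hx y y.2) (fun y => hq'0 x hx y y.2) (hq1 x hx) (hq'1 x hx)
    (hC x hx).1 (hC' x hx).1 (max C C') ((hC x hx).2.2.trans (le_max_left _ _))
    (hC' x hx).2.1 ((hC' x hx).2.2.trans (le_max_right _ _)) (hC x hx).2.1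
  -- uniform deviation of the unperturbed entropies
  have hc₂ : 0 < c₂ := hc₁.trans_le hc₁₂
  have dev : ∀ ε : ℝ, 0 < ε → ∃ k : ℕ, ∀ x ∈ T, k ≤ x.length →
      |(∑' y : succs T x, phi (q x y)) - h * ℓ x| ≤ ε := by
    intro ε hε
    obtain ⟨k, hk⟩ := hh (ε / c₂) (div_pos hε hc₂)
    refine ⟨k, fun x hx hl => ?_⟩
    have h1 := hk x hx hl
    have hp : 0 < ℓ x := hc₁.trans_le (hℓ x hx).1
    have : (∑' y : succs T x, phi (q x y)) - h * ℓ x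
        = ((∑' y : succs T x, phi (q x y)) / ℓ x - h) * ℓ x := by
      field_simp
    rw [this, abs_mul, abs_of_pos hp]
    calc _ ≤ ε / c₂ * c₂ := mul_le_mul h1.le (hℓ x hx).2 hp.le (div_pos hε hc₂).le
      _ = ε := by field_simp
  have bd : ∀ x ∈ T, |(∑' y : succs T x, phi (q x y)) - h * ℓ x| ≤ C + |h| * c₂ := by
    intro x hx
    have hp : 0 < ℓ x := hc₁.trans_le (hℓ x hx).1
    refine (abs_sub _ _).trans ?_
    rw [abs_mul, abs_of_pos hp, abs_of_nonneg (hC x hx).2.1]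
    exact add_le_add (hC x hx).2.2 (mul_le_mul_of_nonneg_left (hℓ x hx).2 (abs_nonneg _))
  set s : ℕ → ℝ := fun n =>
    ⨆ x : levn T n, |(∑' y : succs T (x : List ℕ), phi (q x y)) - h * ℓ x| with hs
  have s0 : ∀ n, 0 ≤ s n := fun n => Real.iSup_nonneg fun x => abs_nonneg _
  have st : Tendsto s atTop (nhds 0) := by
    rw [Metric.tendsto_atTop]
    intro ε hε
    obtain ⟨k, hk⟩ := dev (ε / 2) (half_pos hε)
    refine ⟨k, fun n hn => ?_⟩
    rw [Real.dist_eq, sub_zero, abs_of_nonneg (s0 n)]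
    refine lt_of_le_of_lt (Real.iSup_le (fun x => hk x x.2.1 ?_) (half_pos hε).le) (half_lt_self hε)
    rw [x.2.2]; exact hn
  have sle : ∀ x ∈ T, |(∑' y : succs T x, phi (q x y)) - h * ℓ x| ≤ s x.length := by
    intro x hx
    exact le_ciSup (f := fun x : levn T x.length =>
      |(∑' y : succs T (x : List ℕ), phi (q x y)) - h * ℓ x|)
      ⟨C + |h| * c₂, by rintro _ ⟨z, rfl⟩; exact bd z z.2.1⟩ ⟨x, hx, rfl⟩
  refine det_main T hT (fun x y => perturb q q' δn x y ω)
    (fun x => flowOf (perturb q q' δn) x ω) (by simp [flowOf]) ?_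
    (fun x hx y hy => (mix x hx).1 ⟨y, hy⟩) (fun x hx => (mix x hx).2.1)
    (fun x hx => (mix x hx).2.2.1) ℓ c₁ c₂ hc₁ hℓ h
    (fun n => (δn n ω * max C C' + (phi (δn n ω) + phi (1 - δn n ω))) + s n) ?_ ?_
  · intro x m
    simp only [flowOf, List.length_append, List.length_singleton, Finset.prod_range_succ]
    congr 1
    · refine Finset.prod_congr rfl fun i hi => ?_
      rw [List.take_append_of_le_length (Finset.mem_range.1 hi).le,
        List.take_append_of_le_length (Finset.mem_range.1 hi)]
    · rw [List.take_left, List.take_of_length_le (by simp)]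
  · have := ((hω.mul_const (max C C')).add (phi_tendsto hω)).add st
    simpa using this
  · intro x hx
    exact (abs_sub_le _ (∑' y : succs T x, phi (q x y)) _).trans
      (add_le_add (mix x hx).2.2.2 (sle x hx))
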